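/- There is no 2-dimensional totally isotropic complex subspace W ≤ ℂ⁴ (for the complexified Minkowski form B_ℂ) with W ∩ \overline{W} = {0}. (Equivalently: every 2-dimensional B_ℂ-totally-isotropic subspace of ℂ⁴ meets its conjugate nontrivially. This is the nontrivial half of the proof that W and \overline{W} intersect in a line in Proposition 5 of the paper; it is proved by comparing the signatures of the Hermitian form h(v,w) = B_ℂ(v, \overline{w}) restricted to W and \overline{W}.) -/

import Mathlib

/-!
Let `h(v, w) = Bc v (conj w)` be the associated Hermitian form, of signature (3,1). If `v` is a
`Bc`-null vector then `v₃² = v₀² + v₁² + v₂²`, so the triangle inequality gives `h(v, v) ≥ 0`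
(`normSq_le_of_null`). If a totally isotropic plane `W` met its conjugate trivially, then
`ℂ⁴ = W ⊕ conj W` by dimension (`finrank_conjS`), and the two summands are `h`-orthogonal because
`h(a, conj b) = Bc a b = 0`. Hence `h` would be positive semidefinite on all of `ℂ⁴`, which the
timelike vector `e₃` with `h(e₃, e₃) = -1` contradicts.
-/

/-- The complexified Minkowski form on `ℂ⁴`. -/
def Bc (x y : Fin 4 → ℂ) : ℂ := x 0 * y 0 + x 1 * y 1 + x 2 * y 2 - x 3 * y 3

/-- The Minkowski form of signature (3,1) on `ℝ⁴`. -/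
def Br (x y : Fin 4 → ℝ) : ℝ := x 0 * y 0 + x 1 * y 1 + x 2 * y 2 - x 3 * y 3

/-- Componentwise complex conjugation on `ℂ⁴`. -/
def conjV (v : Fin 4 → ℂ) : Fin 4 → ℂ := fun i => starRingEnd ℂ (v i)

/-- The inclusion `ℝ⁴ ↪ ℂ⁴`. -/
def realify (v : Fin 4 → ℝ) : Fin 4 → ℂ := fun i => (v i : ℂ)

/-- The conjugate `\overline{W}` of a complex subspace `W ≤ ℂ⁴`. -/
noncomputable def conjS (W : Submodule ℂ (Fin 4 → ℂ)) : Submodule ℂ (Fin 4 → ℂ) where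
  carrier := conjV '' W
  add_mem' := by
    rintro x y ⟨a, ha, rfl⟩ ⟨b, hb, rfl⟩
    exact ⟨a + b, W.add_mem ha hb, by funext i; simp [conjV]⟩
  zero_mem' := ⟨0, W.zero_mem, by funext i; simp [conjV]⟩
  smul_mem' := by
    rintro c x ⟨a, ha, rfl⟩
    exact ⟨starRingEnd ℂ c • a, W.smul_mem _ ha, by funext i; simp [conjV, mul_comm]⟩

/-- The Hermitian form `h` is nonnegative on `Bc`-null vectors. -/
lemma normSq_le_of_null {v : Fin 4 → ℂ} (hv : Bc v v = 0) :
    Complex.normSq (v 3) ≤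
      Complex.normSq (v 0) + Complex.normSq (v 1) + Complex.normSq (v 2) := by
  have h : v 3 * v 3 = v 0 * v 0 + v 1 * v 1 + v 2 * v 2 := by
    unfold Bc at hv
    linear_combination -hv
  have h' := norm_add₃_le (a := v 0 * v 0) (b := v 1 * v 1) (c := v 2 * v 2)
  rw [← h] at h'
  simpa only [norm_mul, Complex.norm_mul_self_eq_normSq] using h'

lemma finrank_conjS (W : Submodule ℂ (Fin 4 → ℂ)) :
    Module.finrank ℂ (conjS W) = Module.finrank ℂ W := by
  have inv (v : Fin 4 → ℂ) : conjV (conjV v) = v := by funext i; simp [conjV]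
  let j : W ≃+ conjS W :=
    { toFun := fun v => ⟨conjV v, v, v.2, rfl⟩
      invFun := fun v => ⟨conjV v, by
        obtain ⟨_, a, ha, rfl⟩ := v
        simpa only [inv, SetLike.mem_coe] using ha⟩
      left_inv := fun v => Subtype.ext (inv v)
      right_inv := fun v => Subtype.ext (inv v)
      map_add' := fun v w => Subtype.ext (by funext i; simp [conjV]) }
  have hr := rank_eq_of_equiv_equiv (starRingEnd ℂ) j (starRingAut (R := ℂ)).bijective
    (fun c v => Subtype.ext (by funext i; simp [j, conjV]))
  exact (congrArg Cardinal.toNat hr).symm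

/-- There is no 2-dimensional totally isotropic complex subspace of `ℂ⁴` (for the
complexified Minkowski form) meeting its conjugate trivially. -/
theorem no_isotropic_plane_disjoint_from_conjugate :
    ¬ ∃ W : Submodule ℂ (Fin 4 → ℂ),
        Module.finrank ℂ W = 2 ∧
        (∀ x ∈ W, ∀ y ∈ W, Bc x y = 0) ∧
        W ⊓ conjS W = ⊥ := by
  rintro ⟨W, hdim, hiso, hdisj⟩
  have htop : W ⊔ conjS W = ⊤ := by
    apply Submodule.eq_top_of_disjoint
    · simp [finrank_conjS, hdim]
    · exact disjoint_iff.mpr hdisj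
  have hmem : (Pi.single 3 1 : Fin 4 → ℂ) ∈ W ⊔ conjS W := htop ▸ Submodule.mem_top
  obtain ⟨a, ha, _, ⟨b, hb, rfl⟩, hab⟩ := Submodule.mem_sup.mp hmem
  have h0 : a 0 + starRingEnd ℂ (b 0) = 0 := by simpa [conjV] using congrFun hab 0
  have h1 : a 1 + starRingEnd ℂ (b 1) = 0 := by simpa [conjV] using congrFun hab 1
  have h2 : a 2 + starRingEnd ℂ (b 2) = 0 := by simpa [conjV] using congrFun hab 2
  have h3 : a 3 + starRingEnd ℂ (b 3) = 1 := by simpa [conjV] using congrFun hab 3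
  have na := normSq_le_of_null (hiso a ha a ha)
  have nb := normSq_le_of_null (hiso b hb b hb)
  -- `|x + conj y|² = |x|² + |y|² + 2 Re (x y)` in each coordinate; the cross terms assemble to
  -- `2 Re (Bc a b) = 0`.
  have key (x y : ℂ) : Complex.normSq (x + starRingEnd ℂ y) =
      Complex.normSq x + Complex.normSq y + 2 * (x * y).re := by
    rw [Complex.normSq_add, Complex.conj_conj, Complex.normSq_conj]
  have k0 := key (a 0) (b 0)
  have k1 := key (a 1) (b 1)
  have k2 := key (a 2) (b 2)
  have k3 := key (a 3) (b 3)
  rw [h0, map_zero] at k0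
  rw [h1, map_zero] at k1
  rw [h2, map_zero] at k2
  rw [h3, map_one] at k3
  have hre := congrArg Complex.re (hiso a ha b hb)
  simp only [Bc, Complex.add_re, Complex.sub_re, Complex.zero_re] at hre
  linarith
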